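/- Fix q ≥ 1 and σ > 0. Let (p_n) and (s_n) be sequences of positive integers with s_n ≤ p_n/4 for all n and s_n/p_n → 0, and let (a_n) be positive reals with a_n ≥ a_{q,n}(1) := √(2σ² log(p_n/s_n − 1) + qσ² log log(p_n/s_n − 1)) + √(qσ² log log(p_n/s_n − 1)) for all n. Let β̂^{a_n} be the hard-thresholding estimator β̂^{a_n}_j(Y) = Y_j·1{|Y_j| ≥ t_n(max(a_n, t*_n))}. Then: limsup_n [ sup_{β ∈ Ω^{p_n}_{s_n,a_n}} E_β‖β̂^{a_n}(Y) − β‖_q^q ] / (s_n σ_q^q) ≤ 1. -/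

import Mathlib

/-!
Hard thresholding acts coordinatewise, so the risk is a sum of one-dimensional Gaussian integrals
(`seqRisk_hardThr`). After rescaling to `σ = 1` put `L = log (p/s - 1)`, signal size `α`,
threshold `τ = α/2 + L/α` and margin `w = α - τ = α/2 - L/α`. Then `τ² = w² + 2L`, and
`α ≥ a_q(1)` says exactly that `w² ≥ q log L` with `w ≥ 0`.

* A signal coordinate costs `σ_q^q`, the main term, plus `|b|^q` times the probability of missing
  the signal (`signal_coord`), which is at most `e^{-w'²/2}/w'` with `w' = |b| - τ ≥ w`.
* A null coordinate costs the tail moment `E|ε|^q 1{|ε| ≥ τ}` (`zero_coord`), at most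
  `2 τ^q e^{-τ²/2}/(τ - q/τ)` by log-concavity (`tangent_bound`, `tail_Ici`). There are at most
  `p ≤ 2 s e^L` of them, and `e^L e^{-τ²/2} = e^{-w²/2}`.

Both errors are thus at most a constant times `s (√(2L) + 2w)^q e^{-w²/2}/w`, and this is
`o(s)` uniformly in `w ≥ √(q log L)` because `e^{-w²/2} ≤ L^{-q/2}` (`decay`, `errors_small`).
-/

open MeasureTheory ProbabilityTheory Filter
open scoped ENNReal NNReal BigOperators Classical

noncomputable section

/-- The Gaussian distribution `N(m, σ²)` on `ℝ`. -/
def gauss (m σ : ℝ) : Measure ℝ := gaussianReal m ⟨σ ^ 2, sq_nonneg σ⟩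

/-- The standard Gaussian distribution on `ℝ`. -/
def stdG : Measure ℝ := gaussianReal 0 1

/-- The Gaussian sequence model: `Y` has independent coordinates `Y j ~ N(β j, σ²)`. -/
def seqModel (p : ℕ) (σ : ℝ) (β : Fin p → ℝ) : Measure (Fin p → ℝ) :=
  Measure.pi fun j => gauss (β j) σ

/-- `Ω^p_{s,a}`: `s`-sparse vectors with nonzero coordinates at least `a` in absolute value. -/
def sparseSet (p s : ℕ) (a : ℝ) : Set (Fin p → ℝ) :=
  {β | (Finset.univ.filter fun i => β i ≠ 0).card ≤ s ∧ ∀ i, β i ≠ 0 → a ≤ |β i|}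

/-- The risk `E_β ‖est(Y) − β‖_q^q` in the Gaussian sequence model. -/
def seqRisk (p : ℕ) (σ q : ℝ) (est : (Fin p → ℝ) → Fin p → ℝ) (β : Fin p → ℝ) : ℝ≥0∞ :=
  ∫⁻ y, ENNReal.ofReal (∑ j, |est y j - β j| ^ q) ∂(seqModel p σ β)

/-- The maximal risk over `Ω^p_{s,a}`. -/
def maxRisk (p s : ℕ) (σ q a : ℝ) (est : (Fin p → ℝ) → Fin p → ℝ) : ℝ≥0∞ :=
  ⨆ β ∈ sparseSet p s a, seqRisk p σ q est β

/-- The minimax risk over `Ω^p_{s,a}` in the Gaussian sequence model. -/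
def minimax (p s : ℕ) (σ q a : ℝ) : ℝ≥0∞ :=
  ⨅ (est : (Fin p → ℝ) → Fin p → ℝ) (_ : Measurable est), maxRisk p s σ q a est

/-- `σ_q^q = E|η|^q` where `η ~ N(0, σ²)`. -/
def sigmaqq (σ q : ℝ) : ℝ := ∫ x, |x| ^ q ∂(gauss 0 σ)

/-- `P(σ ε > t)` for a standard Gaussian `ε`. -/
def PgtS (σ t : ℝ) : ℝ := (stdG {x | t < σ * x}).toReal

/-- `P(σ ε ≥ t)` for a standard Gaussian `ε`. -/
def PgeS (σ t : ℝ) : ℝ := (stdG {x | t ≤ σ * x}).toReal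

/-- The threshold `t(a) = a/2 + σ² log(p/s − 1)/a`. -/
def tFun (p s : ℕ) (σ a : ℝ) : ℝ := a / 2 + σ ^ 2 * Real.log ((p : ℝ) / s - 1) / a

/-- `t* = σ √(2 log(p/s − 1))`. -/
def tStar (p s : ℕ) (σ : ℝ) : ℝ := σ * Real.sqrt (2 * Real.log ((p : ℝ) / s - 1))

/-- `ψ(p,s,a,σ) = (p−s) P(σε > t(a)) + s P(σε > a − t(a))`. -/
def psi (p s : ℕ) (σ a : ℝ) : ℝ :=
  ((p : ℝ) - s) * PgtS σ (tFun p s σ a) + s * PgtS σ (a - tFun p s σ a)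

/-- `ψ₊(p,s,a,σ) = (p−s) P(σε > t(a)) + s P(σε > (a − t(a))₊)`. -/
def psiPlus (p s : ℕ) (σ a : ℝ) : ℝ :=
  ((p : ℝ) - s) * PgtS σ (tFun p s σ a) + s * PgtS σ (max (a - tFun p s σ a) 0)

/-- The hard-thresholding estimator at level `τ`. -/
def hardThr (p : ℕ) (τ : ℝ) : (Fin p → ℝ) → Fin p → ℝ :=
  fun y j => if τ ≤ |y j| then y j else 0

/-- `a_q(1)` from the paper (at stage `p`, `s`). -/
def aOne (p s : ℕ) (σ q : ℝ) : ℝ :=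
  Real.sqrt (2 * σ ^ 2 * Real.log ((p : ℝ) / s - 1)
      + q * σ ^ 2 * Real.log (Real.log ((p : ℝ) / s - 1)))
    + Real.sqrt (q * σ ^ 2 * Real.log (Real.log ((p : ℝ) / s - 1)))

/-! ### Elementary estimates -/

/-- The bound `t^q e^{-t²/2} / (t - q/t)` on the Gaussian tail moment `∫_t^∞ x^q e^{-x²/2} dx`;
it is meaningful for `t > 0` and `q < t²`. -/
def tailB (q t : ℝ) : ℝ := t ^ q * Real.exp (-t ^ 2 / 2) / (t - q / t)

/-- Log-concavity of `x ↦ x^q e^{-x²/2}`: the logarithm lies below its tangent line at `t`. -/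
lemma tangent_bound {q t x : ℝ} (hq : 0 ≤ q) (ht : 0 < t) (hx : t ≤ x) :
    x ^ q * Real.exp (-x ^ 2 / 2)
      ≤ t ^ q * Real.exp (-t ^ 2 / 2) * Real.exp (-(t - q / t) * (x - t)) := by
  have hx0 : 0 < x := ht.trans_le hx
  have h1 : x ^ q ≤ t ^ q * Real.exp (q * (x / t - 1)) := by
    have e1 : x = t * (x / t) := by field_simp
    have e2 : x / t ≤ Real.exp (x / t - 1) := by
      have := Real.add_one_le_exp (x / t - 1); linarith
    calc x ^ q = t ^ q * (x / t) ^ q := by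
            conv_lhs => rw [e1]
            exact Real.mul_rpow ht.le (by positivity)
      _ ≤ t ^ q * (Real.exp (x / t - 1)) ^ q := by gcongr
      _ = _ := by rw [← Real.exp_mul]; ring_nf
  have h2 : Real.exp (-x ^ 2 / 2) ≤ Real.exp (-t ^ 2 / 2 - t * (x - t)) :=
    Real.exp_le_exp.2 (by nlinarith [sq_nonneg (x - t)])
  calc x ^ q * Real.exp (-x ^ 2 / 2)
      ≤ (t ^ q * Real.exp (q * (x / t - 1))) * Real.exp (-t ^ 2 / 2 - t * (x - t)) := by gcongr
    _ = _ := by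
      rw [mul_assoc, mul_assoc, ← Real.exp_add, ← Real.exp_add]
      congr 2
      field_simp
      ring

/-- The single asymptotic fact behind both error terms: when `w² ≥ q log L`, the factor
`e^{-w²/2} ≤ L^{-q/2}` absorbs `√(2L)^q`, and the remaining `1/w` tends to `0`. -/
lemma decay {q ε : ℝ} (hq : 1 ≤ q) (hε : 0 < ε) :
    ∃ L0 : ℝ, ∀ L ≥ L0, ∀ w, Real.sqrt (q * Real.log L) ≤ w →
      0 < w ∧ (Real.sqrt (2 * L) + 2 * w) ^ q * Real.exp (-w ^ 2 / 2) / w ≤ ε := by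
  have hq0 : (0 : ℝ) ≤ q := by linarith
  have hH : Tendsto (fun w : ℝ => (8 : ℝ) ^ (q / 2) / w
      + 4 ^ q * (w ^ (q - 1) * Real.exp (-(1 / 2) * w))) atTop (nhds 0) := by
    have h1 : Tendsto (fun w : ℝ => (8 : ℝ) ^ (q / 2) / w) atTop (nhds 0) :=
      tendsto_const_nhds.div_atTop tendsto_id
    have h2 := (tendsto_rpow_mul_exp_neg_mul_atTop_nhds_zero (q - 1) (1 / 2)
      (by norm_num)).const_mul ((4 : ℝ) ^ q)
    simpa using h1.add h2
  obtain ⟨W, hW⟩ := eventually_atTop.1 (hH.eventually (eventually_le_nhds hε))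
  have hL : Tendsto (fun L : ℝ => Real.sqrt (q * Real.log L)) atTop atTop :=
    Real.tendsto_sqrt_atTop.comp (Real.tendsto_log_atTop.const_mul_atTop (by linarith))
  obtain ⟨L0, hL0⟩ := eventually_atTop.1
    ((hL.eventually_ge_atTop (max W 1)).and (eventually_ge_atTop (1 : ℝ)))
  refine ⟨L0, fun L hLL w hw => ?_⟩
  obtain ⟨hA, hL1⟩ := hL0 L hLL
  have hwW : W ≤ w := (le_max_left _ _).trans (hA.trans hw)
  have hw1 : 1 ≤ w := (le_max_right _ _).trans (hA.trans hw)
  have hw0 : 0 < w := by linarith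
  have hLpos : 0 < L := by linarith
  refine ⟨hw0, le_trans ?_ (hW w hwW)⟩
  have hsq : q * Real.log L ≤ w ^ 2 := (Real.sqrt_le_left hw0.le).1 hw
  have hexp : Real.exp (-w ^ 2 / 2) ≤ L ^ (-(q / 2)) := by
    rw [Real.rpow_def_of_pos hLpos]
    exact Real.exp_le_exp.2 (by nlinarith)
  have hexp2 : Real.exp (-w ^ 2 / 2) ≤ Real.exp (-(1 / 2) * w) :=
    Real.exp_le_exp.2 (by nlinarith)
  have hs0 : 0 ≤ Real.sqrt (2 * L) := Real.sqrt_nonneg _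
  have hsum : (Real.sqrt (2 * L) + 2 * w) ^ q
      ≤ (2 * Real.sqrt (2 * L)) ^ q + (4 * w) ^ q := by
    rcases le_total (Real.sqrt (2 * L)) (2 * w) with h | h
    · have : (Real.sqrt (2 * L) + 2 * w) ^ q ≤ (4 * w) ^ q :=
        Real.rpow_le_rpow (by positivity) (by linarith) hq0
      have : 0 ≤ (2 * Real.sqrt (2 * L)) ^ q := by positivity
      linarith
    · have : (Real.sqrt (2 * L) + 2 * w) ^ q ≤ (2 * Real.sqrt (2 * L)) ^ q :=
        Real.rpow_le_rpow (by positivity) (by linarith) hq0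
      have : 0 ≤ (4 * w) ^ q := by positivity
      linarith
  have h8 : (2 * Real.sqrt (2 * L)) ^ q = 8 ^ (q / 2) * L ^ (q / 2) := by
    have : 2 * Real.sqrt (2 * L) = Real.sqrt (8 * L) := by
      rw [show 8 * L = 2 ^ 2 * (2 * L) by ring, Real.sqrt_mul (by norm_num : (0 : ℝ) ≤ 2 ^ 2),
        Real.sqrt_sq (by norm_num)]
    rw [this, Real.sqrt_eq_rpow, ← Real.rpow_mul (by positivity),
      Real.mul_rpow (by norm_num) hLpos.le]
    ring_nf
  have hterm1 : (2 * Real.sqrt (2 * L)) ^ q * Real.exp (-w ^ 2 / 2) ≤ 8 ^ (q / 2) := by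
    rw [h8]
    calc (8 : ℝ) ^ (q / 2) * L ^ (q / 2) * Real.exp (-w ^ 2 / 2)
        ≤ 8 ^ (q / 2) * L ^ (q / 2) * L ^ (-(q / 2)) := by gcongr
      _ = 8 ^ (q / 2) := by rw [mul_assoc, ← Real.rpow_add hLpos]; simp
  have hterm2 : (4 * w) ^ q * Real.exp (-w ^ 2 / 2) / w
      ≤ 4 ^ q * (w ^ (q - 1) * Real.exp (-(1 / 2) * w)) := by
    rw [Real.mul_rpow (by norm_num) hw0.le, Real.rpow_sub_one hw0.ne']
    calc (4 : ℝ) ^ q * w ^ q * Real.exp (-w ^ 2 / 2) / w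
        = 4 ^ q * (w ^ q / w * Real.exp (-w ^ 2 / 2)) := by ring
      _ ≤ _ := by gcongr
  calc (Real.sqrt (2 * L) + 2 * w) ^ q * Real.exp (-w ^ 2 / 2) / w
      ≤ ((2 * Real.sqrt (2 * L)) ^ q + (4 * w) ^ q) * Real.exp (-w ^ 2 / 2) / w := by gcongr
    _ = (2 * Real.sqrt (2 * L)) ^ q * Real.exp (-w ^ 2 / 2) / w
        + (4 * w) ^ q * Real.exp (-w ^ 2 / 2) / w := by ring
    _ ≤ _ := add_le_add (by gcongr) hterm2

/-- At noise level one, with `L = log (p/s - 1)`, signal size `α` and threshold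
`τ = α/2 + L/α`: both the false-alarm contribution `e^L · tailB q τ` and the missed-signal
contribution `b^q · tailB 0 (b - τ)` are negligible, uniformly in `α` and `b`. -/
lemma errors_small {q ε : ℝ} (hq : 1 ≤ q) (hε : 0 < ε) :
    ∃ L0 : ℝ, ∀ L ≥ L0, ∀ α,
      Real.sqrt (2 * L + q * Real.log L) + Real.sqrt (q * Real.log L) ≤ α →
      Real.sqrt (2 * L) ≤ α ∧ 0 < α ∧ 0 < α / 2 + L / α ∧ q < (α / 2 + L / α) ^ 2 ∧
      Real.exp L * tailB q (α / 2 + L / α) ≤ 2 * ε ∧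
      ∀ b ≥ α, α / 2 + L / α < b ∧ b ^ q * tailB 0 (b - (α / 2 + L / α)) ≤ ε := by
  obtain ⟨L1, hL1⟩ := decay hq hε
  refine ⟨max L1 (q + 1), fun L hL α hα => ?_⟩
  have hLL1 : L1 ≤ L := (le_max_left _ _).trans hL
  have hLq : q + 1 ≤ L := (le_max_right _ _).trans hL
  have hLpos : 0 < L := by linarith
  have hlog : 0 ≤ Real.log L := Real.log_nonneg (by linarith)
  have hqlog : 0 ≤ q * Real.log L := by positivity
  have hD := hL1 L hLL1
  set v := Real.sqrt (q * Real.log L) with hv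
  set u := Real.sqrt (2 * L + q * Real.log L) with hu
  set r := Real.sqrt (2 * L) with hr
  have hv2 : v ^ 2 = q * Real.log L := Real.sq_sqrt hqlog
  have hu2 : u ^ 2 = 2 * L + q * Real.log L := Real.sq_sqrt (by positivity)
  have hr2 : r ^ 2 = 2 * L := Real.sq_sqrt (by positivity)
  have hv0 : 0 ≤ v := Real.sqrt_nonneg _
  have hu0 : 0 ≤ u := Real.sqrt_nonneg _
  have hr0 : 0 < r := Real.sqrt_pos.2 (by positivity)
  have hru : r ≤ u := Real.sqrt_le_sqrt (by linarith)
  have hα0 : 0 < α := by linarith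
  set τ := α / 2 + L / α with hτ
  set w := α - τ with hw
  have hw' : w = α / 2 - L / α := by rw [hw, hτ]; ring
  have hLα : L / α * α = L := by field_simp
  have hLα0 : 0 < L / α := by positivity
  have hτ0 : 0 < τ := by positivity
  have hτw : τ ^ 2 = w ^ 2 + 2 * L := by rw [hw', hτ]; linear_combination 2 * hLα
  have hvw : v ≤ w := by
    have h1 : u ^ 2 ≤ (α - v) ^ 2 := by
      apply pow_le_pow_left₀ hu0; linarith
    have h2 : 0 ≤ (w - v) * α := by rw [hw']; nlinarith
    have := nonneg_of_mul_nonneg_left h2 hα0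
    linarith
  obtain ⟨hw0, hDw⟩ := hD w hvw
  have hτr : τ ≤ r + w := by
    refine (pow_le_pow_iff_left₀ hτ0.le (by positivity) two_ne_zero).1 ?_
    nlinarith [mul_pos hr0 hw0]
  have hwτ : w ≤ τ := by rw [hw', hτ]; linarith
  refine ⟨by linarith, hα0, hτ0, by nlinarith, ?_, fun b hb => ⟨by linarith, ?_⟩⟩
  · have hden : τ / 2 ≤ τ - q / τ := by
      have : q / τ ≤ τ / 2 := by
        rw [div_le_div_iff₀ hτ0 (by norm_num)]; nlinarith
      linarith
    have hexp : Real.exp L * Real.exp (-τ ^ 2 / 2) = Real.exp (-w ^ 2 / 2) := by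
      rw [← Real.exp_add]; congr 1; rw [hτw]; ring
    calc Real.exp L * tailB q τ
        = τ ^ q * Real.exp (-w ^ 2 / 2) / (τ - q / τ) := by
          rw [tailB, ← hexp]; ring
      _ ≤ (r + 2 * w) ^ q * Real.exp (-w ^ 2 / 2) / (w / 2) := by
          gcongr
          · linarith
          · linarith
      _ = 2 * ((r + 2 * w) ^ q * Real.exp (-w ^ 2 / 2) / w) := by field_simp
      _ ≤ 2 * ε := by linarith
  · have hwb : w ≤ b - τ := by linarith
    obtain ⟨hb0, hDb⟩ := hD (b - τ) (hvw.trans hwb)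
    refine le_trans ?_ hDb
    have hbb : b ≤ r + 2 * (b - τ) := by linarith
    have hb0 : 0 < b := by linarith
    calc b ^ q * tailB 0 (b - τ) = b ^ q * Real.exp (-(b - τ) ^ 2 / 2) / (b - τ) := by
          rw [tailB]; simp [mul_div_assoc]
      _ ≤ _ := by gcongr

/-! ### Gaussian tail moments -/

lemma tail_Ici {q t : ℝ} (hq : 0 ≤ q) (ht : 0 < t) (hqt : q < t ^ 2) :
    ∫⁻ x in Set.Ici t, ENNReal.ofReal (|x| ^ q) ∂stdG ≤ ENNReal.ofReal (tailB q t) := by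
  have hc : 0 < t - q / t := by
    have : q / t < t := by rw [div_lt_iff₀ ht]; nlinarith
    linarith
  set c := t - q / t with hcdef
  set K := t ^ q * Real.exp (-t ^ 2 / 2) with hK
  have hK0 : 0 ≤ K := by positivity
  have hint : IntegrableOn (fun x => K * Real.exp (c * t) * Real.exp (-c * x)) (Set.Ioi t) :=
    (integrableOn_exp_mul_Ioi (by linarith) t).const_mul _
  rw [stdG, gaussianReal_of_var_ne_zero _ one_ne_zero,
    setLIntegral_withDensity_eq_setLIntegral_mul _ (measurable_gaussianPDF 0 1)
      (by fun_prop) measurableSet_Ici]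
  calc ∫⁻ x in Set.Ici t, (gaussianPDF 0 1 * fun x => ENNReal.ofReal (|x| ^ q)) x
      ≤ ∫⁻ x in Set.Ici t, ENNReal.ofReal (K * Real.exp (c * t) * Real.exp (-c * x)) := by
        refine setLIntegral_mono (by fun_prop) fun x hx => ?_
        have hx : t ≤ x := hx
        rw [Pi.mul_apply, gaussianPDF, ← ENNReal.ofReal_mul (gaussianPDFReal_nonneg _ _ _)]
        apply ENNReal.ofReal_le_ofReal
        have hb := tangent_bound hq ht hx
        have hpdf : gaussianPDFReal 0 1 x ≤ Real.exp (-x ^ 2 / 2) := by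
          rw [gaussianPDFReal]
          simp only [NNReal.coe_one, mul_one, sub_zero]
          refine mul_le_of_le_one_left (Real.exp_pos _).le (inv_le_one_of_one_le₀ ?_)
          rw [Real.one_le_sqrt]
          linarith [Real.pi_gt_three]
        rw [abs_of_nonneg (ht.le.trans hx)]
        calc gaussianPDFReal 0 1 x * x ^ q ≤ Real.exp (-x ^ 2 / 2) * x ^ q := by
              gcongr
              exact Real.rpow_nonneg (ht.le.trans hx) _
          _ = x ^ q * Real.exp (-x ^ 2 / 2) := mul_comm _ _
          _ ≤ K * Real.exp (-c * (x - t)) := hb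
          _ = _ := by rw [mul_assoc K, ← Real.exp_add]; ring_nf
    _ = ∫⁻ x in Set.Ioi t, ENNReal.ofReal (K * Real.exp (c * t) * Real.exp (-c * x)) :=
        setLIntegral_congr Ioi_ae_eq_Ici.symm
    _ = ENNReal.ofReal (∫ x in Set.Ioi t, K * Real.exp (c * t) * Real.exp (-c * x)) :=
        (ofReal_integral_eq_lintegral_ofReal hint
          (ae_of_all _ fun x => by positivity)).symm
    _ ≤ ENNReal.ofReal (tailB q t) := by
        apply ENNReal.ofReal_le_ofReal
        rw [integral_const_mul, integral_exp_mul_Ioi (by linarith), tailB, ← hK, ← hcdef]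
        have : Real.exp (c * t) * Real.exp (-c * t) = 1 := by
          rw [← Real.exp_add]; simp
        apply le_of_eq
        rw [neg_div_neg_eq]
        linear_combination (K / c) * this

lemma stdG_neg : MeasurePreserving (fun x : ℝ => -x) stdG stdG :=
  ⟨by fun_prop, by rw [stdG, gaussianReal_map_neg, neg_zero]⟩

lemma tail_Iic {q t : ℝ} (hq : 0 ≤ q) (ht : 0 < t) (hqt : q < t ^ 2) :
    ∫⁻ x in Set.Iic (-t), ENNReal.ofReal (|x| ^ q) ∂stdG ≤ ENNReal.ofReal (tailB q t) := by
  refine le_trans (le_of_eq ?_) (tail_Ici hq ht hqt)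
  rw [← lintegral_indicator measurableSet_Iic, ← lintegral_indicator measurableSet_Ici,
    ← stdG_neg.lintegral_comp ((by fun_prop : Measurable fun x : ℝ =>
      ENNReal.ofReal (|x| ^ q)).indicator measurableSet_Iic)]
  congr 1
  ext x
  simp [Set.indicator_apply]

lemma tailB_nonneg {q t : ℝ} (ht : 0 < t) (hqt : q < t ^ 2) : 0 ≤ tailB q t := by
  have : q / t < t := by rw [div_lt_iff₀ ht]; nlinarith
  exact div_nonneg (by positivity) (by linarith)

lemma tail_abs {q t : ℝ} (hq : 0 ≤ q) (ht : 0 < t) (hqt : q < t ^ 2) :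
    ∫⁻ x in {x | t ≤ |x|}, ENNReal.ofReal (|x| ^ q) ∂stdG
      ≤ ENNReal.ofReal (2 * tailB q t) := by
  have hset : {x : ℝ | t ≤ |x|} = Set.Ici t ∪ Set.Iic (-t) := by
    ext x; simp [le_abs, le_neg]
  rw [hset, two_mul, ENNReal.ofReal_add (tailB_nonneg ht hqt) (tailB_nonneg ht hqt)]
  exact (lintegral_union_le _ _ _).trans (add_le_add (tail_Ici hq ht hqt) (tail_Iic hq ht hqt))

/-- The probability that a signal `b` above the threshold `t` goes undetected. -/
lemma miss_prob {σ b t : ℝ} (hσ : 0 < σ) (hb : t < |b|) :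
    stdG {x | |b + σ * x| < t} ≤ ENNReal.ofReal (tailB 0 ((|b| - t) / σ)) := by
  have hw : 0 < (|b| - t) / σ := div_pos (by linarith) hσ
  have h1 := tail_Ici le_rfl hw (by positivity)
  have h2 := tail_Iic le_rfl hw (by positivity)
  simp only [Real.rpow_zero, ENNReal.ofReal_one, setLIntegral_one] at h1 h2
  rcases le_total 0 b with h | h
  · refine (measure_mono fun x hx => ?_).trans h2
    have hx := (abs_lt.1 (show |b + σ * x| < t from hx)).2
    rw [abs_of_nonneg h, Set.mem_Iic, ← neg_div, le_div_iff₀ hσ]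
    linarith
  · refine (measure_mono fun x hx => ?_).trans h1
    have hx := (abs_lt.1 (show |b + σ * x| < t from hx)).1
    rw [abs_of_nonpos h, Set.mem_Ici, div_le_iff₀ hσ]
    linarith

/-! ### Risk of hard thresholding -/

lemma gauss_eq_map (b σ : ℝ) : gauss b σ = stdG.map (fun x => b + σ * x) := by
  have : (fun x : ℝ => b + σ * x) = (b + ·) ∘ (σ * ·) := rfl
  rw [this, ← Measure.map_map (by fun_prop) (by fun_prop), stdG, gaussianReal_map_const_mul,
    gaussianReal_map_const_add, gauss]
  congr 1
  · simp
  · ext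
    simp only [mul_one]
    rfl

lemma lintegral_gauss (b σ : ℝ) {f : ℝ → ℝ≥0∞} (hf : Measurable f) :
    ∫⁻ x, f x ∂(gauss b σ) = ∫⁻ x, f (b + σ * x) ∂stdG := by
  rw [gauss_eq_map, lintegral_map hf (by fun_prop)]

lemma integrable_abs_rpow {σ q : ℝ} (hq : 1 ≤ q) :
    Integrable (fun x => |x| ^ q) (gauss 0 σ) := by
  have h := (memLp_id_gaussianReal (μ := 0) (v := ⟨σ ^ 2, sq_nonneg σ⟩)
    q.toNNReal).integrable_norm_rpow (by simpa using by linarith) (by simp)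
  simpa [Real.coe_toNNReal q (by linarith), gauss] using h

lemma sigmaqq_pos {σ q : ℝ} (hσ : 0 < σ) (hq : 1 ≤ q) : 0 < sigmaqq σ q := by
  rw [sigmaqq, integral_pos_iff_support_of_nonneg (fun x => by positivity)
    (integrable_abs_rpow hq)]
  have hv : (⟨σ ^ 2, sq_nonneg σ⟩ : ℝ≥0) ≠ 0 := by
    intro h
    have h2 : σ ^ 2 = 0 := congrArg NNReal.toReal h
    exact (pow_pos hσ 2).ne' h2
  have hS : Function.support (fun x : ℝ => |x| ^ q) = {0}ᶜ := by
    ext x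
    simp [Real.rpow_eq_zero (abs_nonneg x) (by linarith : q ≠ 0)]
  have : NullSingletonClass (gauss 0 σ) := nullSingletonClass_gaussianReal hv
  have : IsProbabilityMeasure (gauss 0 σ) := instIsProbabilityMeasureGaussianReal _ _
  rw [hS, prob_compl_eq_one_sub (measurableSet_singleton _)]
  simp

lemma measurable_thr (q t b : ℝ) :
    Measurable fun x : ℝ => ENNReal.ofReal (|(if t ≤ |x| then x else 0) - b| ^ q) := by
  have : Measurable fun x : ℝ => if t ≤ |x| then x else 0 :=
    Measurable.ite (measurableSet_le measurable_const (by fun_prop)) measurable_id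
      measurable_const
  fun_prop

/-- Risk on a null coordinate: only observations beyond the threshold contribute. -/
lemma zero_coord {σ q τ : ℝ} (hσ : 0 < σ) (hq : 1 ≤ q) (hτ : 0 < τ) (hqτ : q < τ ^ 2) :
    ∫⁻ x, ENNReal.ofReal (|(if σ * τ ≤ |x| then x else 0) - 0| ^ q) ∂(gauss 0 σ)
      ≤ ENNReal.ofReal (σ ^ q * (2 * tailB q τ)) := by
  rw [lintegral_gauss _ _ (measurable_thr q (σ * τ) 0), ENNReal.ofReal_mul (by positivity)]
  have hms : MeasurableSet {x : ℝ | τ ≤ |x|} :=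
    measurableSet_le measurable_const (by fun_prop)
  have : ∀ x : ℝ, ENNReal.ofReal (|(if σ * τ ≤ |0 + σ * x| then 0 + σ * x else 0) - 0| ^ q)
      = ENNReal.ofReal (σ ^ q)
        * {x : ℝ | τ ≤ |x|}.indicator (fun x => ENNReal.ofReal (|x| ^ q)) x := by
    intro x
    have h1 : σ * τ ≤ |σ * x| ↔ τ ≤ |x| := by
      rw [abs_mul, abs_of_pos hσ, mul_le_mul_iff_right₀ hσ]
    by_cases h : τ ≤ |x|
    · have h2 := h1.2 h
      rw [Set.indicator_of_mem (by exact h), ← ENNReal.ofReal_mul (by positivity), zero_add,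
        if_pos h2, sub_zero, abs_mul, abs_of_pos hσ, Real.mul_rpow hσ.le (abs_nonneg x)]
    · have h2 := mt h1.1 h
      rw [Set.indicator_of_notMem (by exact h), zero_add, if_neg h2, sub_zero, abs_zero,
        Real.zero_rpow (by linarith)]
      simp
  simp_rw [this]
  rw [lintegral_const_mul' _ _ ENNReal.ofReal_ne_top, lintegral_indicator hms]
  gcongr
  exact tail_abs (by linarith) hτ hqτ

/-- Risk on a signal coordinate: the noise moment, plus `|b|^q` times the probability of
missing the signal. -/
lemma signal_coord {σ q b t : ℝ} (hσ : 0 < σ) (hq : 1 ≤ q) (hb : t < |b|) :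
    ∫⁻ x, ENNReal.ofReal (|(if t ≤ |x| then x else 0) - b| ^ q) ∂(gauss b σ)
      ≤ ENNReal.ofReal (sigmaqq σ q + |b| ^ q * tailB 0 ((|b| - t) / σ)) := by
  have hw : 0 < (|b| - t) / σ := div_pos (by linarith) hσ
  have hms : MeasurableSet {x : ℝ | |b + σ * x| < t} :=
    measurableSet_lt (by fun_prop) measurable_const
  have hB := tailB_nonneg (q := 0) hw (by positivity)
  rw [lintegral_gauss _ _ (measurable_thr q t b),
    ENNReal.ofReal_add (sigmaqq_pos hσ hq).le (by positivity), sigmaqq,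
    ofReal_integral_eq_lintegral_ofReal (integrable_abs_rpow hq)
      (ae_of_all _ fun x => by positivity), lintegral_gauss _ _ (by fun_prop)]
  calc ∫⁻ x, ENNReal.ofReal (|(if t ≤ |b + σ * x| then b + σ * x else 0) - b| ^ q) ∂stdG
      ≤ ∫⁻ x, (ENNReal.ofReal (|0 + σ * x| ^ q)
          + {x : ℝ | |b + σ * x| < t}.indicator (fun _ => ENNReal.ofReal (|b| ^ q)) x) ∂stdG := by
        refine lintegral_mono fun x => ?_
        by_cases h : t ≤ |b + σ * x|
        · simp [h]
        · have h' : |b + σ * x| < t := not_le.1 h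
          simp [h, h']
    _ = ∫⁻ x, ENNReal.ofReal (|0 + σ * x| ^ q) ∂stdG
          + ENNReal.ofReal (|b| ^ q) * stdG {x : ℝ | |b + σ * x| < t} := by
        rw [lintegral_add_left (by fun_prop), lintegral_indicator hms, setLIntegral_const]
    _ ≤ _ := by
        rw [ENNReal.ofReal_mul (by positivity)]
        gcongr
        exact miss_prob hσ hb

lemma seqRisk_hardThr (p : ℕ) (σ q t : ℝ) (β : Fin p → ℝ) :
    seqRisk p σ q (hardThr p t) β
      = ∑ j, ∫⁻ x, ENNReal.ofReal (|(if t ≤ |x| then x else 0) - β j| ^ q) ∂(gauss (β j) σ) := by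
  have : ∀ j, IsProbabilityMeasure (gauss (β j) σ) := fun j =>
    instIsProbabilityMeasureGaussianReal _ _
  have hmp := fun j => measurePreserving_eval (fun j => gauss (β j) σ) j
  rw [seqRisk, seqModel]
  have : ∀ y : Fin p → ℝ, ENNReal.ofReal (∑ j, |hardThr p t y j - β j| ^ q)
      = ∑ j, ENNReal.ofReal (|(if t ≤ |y j| then y j else 0) - β j| ^ q) := fun y =>
    ENNReal.ofReal_sum_of_nonneg fun j _ => by positivity
  simp_rw [this]
  rw [lintegral_finsetSum]
  · exact Finset.sum_congr rfl fun j _ =>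
      (hmp j).lintegral_comp (measurable_thr q t (β j))
  · exact fun j _ => (measurable_thr q t (β j)).comp (measurable_pi_apply j)

lemma seqRisk_le {p s : ℕ} {σ q a t X Z : ℝ} (hX : 0 ≤ X) (hZ : 0 ≤ Z)
    (hzero : ∫⁻ x, ENNReal.ofReal (|(if t ≤ |x| then x else 0) - 0| ^ q) ∂(gauss 0 σ)
      ≤ ENNReal.ofReal X)
    (hsig : ∀ b : ℝ, a ≤ |b| →
      ∫⁻ x, ENNReal.ofReal (|(if t ≤ |x| then x else 0) - b| ^ q) ∂(gauss b σ)
        ≤ ENNReal.ofReal Z)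
    {β : Fin p → ℝ} (hβ : β ∈ sparseSet p s a) :
    seqRisk p σ q (hardThr p t) β ≤ ENNReal.ofReal (p * X + s * Z) := by
  rw [seqRisk_hardThr]
  calc _ ≤ ∑ j : Fin p, ENNReal.ofReal (X + if β j ≠ 0 then Z else 0) := by
        refine Finset.sum_le_sum fun j _ => ?_
        by_cases h : β j = 0
        · simpa [h] using hzero
        · rw [if_pos h]
          exact (hsig _ (hβ.2 j h)).trans (ENNReal.ofReal_le_ofReal (by linarith))
    _ = ENNReal.ofReal (∑ j : Fin p, (X + if β j ≠ 0 then Z else 0)) :=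
        (ENNReal.ofReal_sum_of_nonneg fun j _ => by positivity).symm
    _ ≤ _ := by
        apply ENNReal.ofReal_le_ofReal
        rw [Finset.sum_add_distrib, ← Finset.sum_filter, Finset.sum_const, Finset.sum_const,
          Finset.card_univ, Fintype.card_fin, nsmul_eq_mul, nsmul_eq_mul]
        have : ((Finset.univ.filter fun i => β i ≠ 0).card : ℝ) ≤ s := by exact_mod_cast hβ.1
        gcongr

/-- The relative risk bound once `L = log (p/s - 1)` is large. -/
lemma maxRisk_le {q σ ε : ℝ} (hq : 1 ≤ q) (hσ : 0 < σ) (hε : 0 < ε) :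
    ∃ L0 : ℝ, ∀ (p s : ℕ) (a : ℝ), 1 ≤ s → (s : ℝ) ≤ (p : ℝ) / 4 →
      L0 ≤ Real.log ((p : ℝ) / s - 1) → aOne p s σ q ≤ a →
      maxRisk p s σ q a (hardThr p (tFun p s σ (max a (tStar p s σ))))
        ≤ ENNReal.ofReal (s * (sigmaqq σ q + 9 * σ ^ q * ε)) := by
  obtain ⟨L0, hL0⟩ := errors_small hq hε
  refine ⟨max L0 1, fun p s a hs hsp hL ha => ?_⟩
  have hs0 : (0 : ℝ) < s := by exact_mod_cast hs
  have hratio : 4 ≤ (p : ℝ) / s := by rw [le_div_iff₀ hs0]; linarith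
  have hexpL : Real.exp (Real.log ((p : ℝ) / s - 1)) = p / s - 1 := Real.exp_log (by linarith)
  set L := Real.log ((p : ℝ) / s - 1) with hLdef
  have hL1 : 1 ≤ L := (le_max_right _ _).trans hL
  have hlog : 0 ≤ Real.log L := Real.log_nonneg hL1
  have hpull : ∀ x : ℝ, Real.sqrt (σ ^ 2 * x) = σ * Real.sqrt x := fun x => by
    rw [Real.sqrt_mul (sq_nonneg σ), Real.sqrt_sq hσ.le]
  have ha1 : aOne p s σ q
      = σ * (Real.sqrt (2 * L + q * Real.log L) + Real.sqrt (q * Real.log L)) := by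
    rw [aOne, ← hLdef, mul_add, ← hpull, ← hpull]
    ring_nf
  have haσ : a = σ * (a / σ) := by field_simp
  obtain ⟨h1, hα, hτ, hqτ, hA, hB⟩ := hL0 L ((le_max_left _ _).trans hL) (a / σ) (by
    rw [le_div_iff₀ hσ, mul_comm, ← ha1]; exact ha)
  have hmax : max a (tStar p s σ) = a := by
    apply max_eq_left
    rw [tStar, ← hLdef, haσ]
    gcongr
  have ht : tFun p s σ a = σ * (a / σ / 2 + L / (a / σ)) := by
    rw [tFun, ← hLdef]
    have : a ≠ 0 := by intro h; simp [h] at hα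
    field_simp
  rw [hmax, ht]
  set τ := a / σ / 2 + L / (a / σ) with hτdef
  have hS := sigmaqq_pos hσ hq
  have hTB := tailB_nonneg hτ hqτ
  have hrisk : ∀ β ∈ sparseSet p s a, seqRisk p σ q (hardThr p (σ * τ)) β
      ≤ ENNReal.ofReal (p * (σ ^ q * (2 * tailB q τ)) + s * (sigmaqq σ q + σ ^ q * ε)) := by
    intro β hβ
    refine seqRisk_le (a := a) (by positivity) (by positivity) (zero_coord hσ hq hτ hqτ)
      (fun b hb => ?_) hβ
    obtain ⟨hb1, hb2⟩ := hB (|b| / σ) (by gcongr)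
    have hbt : σ * τ < |b| := by rw [lt_div_iff₀ hσ] at hb1; linarith
    refine (signal_coord hσ hq hbt).trans (ENNReal.ofReal_le_ofReal ?_)
    have e1 : (|b| - σ * τ) / σ = |b| / σ - τ := by field_simp
    have e2 : |b| ^ q = σ ^ q * (|b| / σ) ^ q := by
      rw [← Real.mul_rpow hσ.le (by positivity)]; congr 1; field_simp
    rw [e1, e2, mul_assoc]
    gcongr
  refine iSup₂_le fun β hβ => (hrisk β hβ).trans (ENNReal.ofReal_le_ofReal ?_)
  -- `p = s (e^L + 1) ≤ 2 s e^L`, so the null coordinates contribute at most `8 s σ^q ε`.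
  have hp : (p : ℝ) ≤ 2 * s * Real.exp L := by
    have : (p : ℝ) = s * (p / s) := by field_simp
    rw [hexpL]
    nlinarith
  have hpT : (p : ℝ) * tailB q τ ≤ 4 * s * ε := by
    calc (p : ℝ) * tailB q τ ≤ 2 * s * Real.exp L * tailB q τ := by gcongr
      _ = 2 * s * (Real.exp L * tailB q τ) := by ring
      _ ≤ 2 * s * (2 * ε) := by gcongr
      _ = _ := by ring
  have hσq : 0 < σ ^ q := by positivity
  nlinarith [mul_le_mul_of_nonneg_left hpT hσq.le]

/-- Sharp upper bound in the hard estimation regime `a ≥ a_q(1)`, as `s/p → 0`. -/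
theorem stmt_9 (q σ : ℝ) (hq : 1 ≤ q) (hσ : 0 < σ)
    (p s : ℕ → ℕ) (a : ℕ → ℝ)
    (hs1 : ∀ n, 1 ≤ s n) (hp1 : ∀ n, 1 ≤ p n)
    (hsp : ∀ n, (s n : ℝ) ≤ (p n : ℝ) / 4)
    (hlim : Tendsto (fun n => (s n : ℝ) / (p n : ℝ)) atTop (nhds 0))
    (ha : ∀ n, 0 < a n) (haL : ∀ n, aOne (p n) (s n) σ q ≤ a n) :
    limsup (fun n =>
        maxRisk (p n) (s n) σ q (a n)
          (hardThr (p n) (tFun (p n) (s n) σ (max (a n) (tStar (p n) (s n) σ))))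
        / ENNReal.ofReal ((s n : ℝ) * sigmaqq σ q)) atTop ≤ 1 := by
  have hS := sigmaqq_pos hσ hq
  have hσq : 0 < σ ^ q := by positivity
  have hratio : Tendsto (fun n => (p n : ℝ) / s n) atTop atTop := by
    have hpos : ∀ᶠ n in atTop, (s n : ℝ) / (p n : ℝ) ∈ Set.Ioi (0 : ℝ) :=
      Eventually.of_forall fun n => by
        have h1 : (0 : ℝ) < s n := by exact_mod_cast hs1 n
        have h2 : (0 : ℝ) < p n := by exact_mod_cast hp1 n
        exact div_pos h1 h2
    have := (tendsto_nhdsWithin_iff.2 ⟨hlim, hpos⟩).inv_tendsto_nhdsGT_zero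
    refine this.congr fun n => ?_
    simp
  have hL : Tendsto (fun n => Real.log ((p n : ℝ) / s n - 1)) atTop atTop :=
    Real.tendsto_log_atTop.comp (tendsto_atTop_add_const_right _ (-1) hratio)
  refine ENNReal.le_of_forall_pos_le_add fun δ hδ _ => ?_
  set ε : ℝ := δ * sigmaqq σ q / (9 * σ ^ q) with hε
  have hδ' : (0 : ℝ) < δ := hδ
  obtain ⟨L0, hL0⟩ := maxRisk_le hq hσ (by positivity : 0 < ε)
  refine limsup_le_of_le (by isBoundedDefault) ?_
  filter_upwards [hL.eventually_ge_atTop L0] with n hn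
  refine ENNReal.div_le_of_le_mul
    ((hL0 _ _ _ (hs1 n) (hsp n) hn (haL n)).trans (le_of_eq ?_))
  have h1 : (1 : ℝ≥0∞) + δ = ENNReal.ofReal (1 + δ) := by
    rw [ENNReal.ofReal_add zero_le_one hδ'.le]; simp
  rw [h1, ← ENNReal.ofReal_mul (by positivity)]
  congr 1
  rw [hε]
  field_simp

end
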